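/- arXiv:2402.15152 — 4 statements merged into one kernel-verified Lean document; each statement's English description precedes it below -/
import Mathlib

section
/- The function u(w) = p·Φ((w + η·n)/√n) + (1 − p)·Φ((−w + η·n)/√n) attains a strict global maximum over ℝ at the unique point w₁* = (ln p − ln(1 − p))/(2η); that is, u(w) < u(w₁*) for every real w ≠ w₁*. Consequently, under standard training the robust feature weight (the ratio w₁*/(n·1)) equals (ln p − ln(1 − p))/(2nη). (Theorem 4.1, standard training.) -/
/-!
By the fundamental theorem of calculus `Phi' t = (2π)^{-1/2} exp (-t²/2)`, so
`u' w` is a positive multiple of `p · exp (-(w + ηn)²/(2n)) - (1 - p) · exp (-(w - ηn)²/(2n))`.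
Taking logarithms of the two terms, their difference is `log p - log (1 - p) - 2ηw`; hence `u'` is
positive to the left of `w₁* = (log p - log (1 - p)) / (2η)` and negative to the right of it, and
`u` is strictly increasing up to `w₁*` and strictly decreasing afterwards.
-/

/-- The standard normal CDF. -/
noncomputable def Phi (t : ℝ) : ℝ :=
  (Real.sqrt (2 * Real.pi))⁻¹ * ∫ s in Set.Iic t, Real.exp (-(s ^ 2) / 2)

/-- The expected clean accuracy `u(w)` for parameters `p`, `η`, `n`. -/
noncomputable def u (p η : ℝ) (n : ℕ) (w : ℝ) : ℝ :=
  p * Phi ((w + η * n) / Real.sqrt n) + (1 - p) * Phi ((-w + η * n) / Real.sqrt n)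

theorem integrable_exp_neg_sq_div_two :
    MeasureTheory.Integrable (fun s : ℝ => Real.exp (-(s ^ 2) / 2)) := by
  have h := integrable_exp_neg_mul_sq (b := 1 / 2) (by norm_num)
  refine h.congr (Filter.Eventually.of_forall fun s => ?_)
  change Real.exp _ = Real.exp _
  congr 1
  ring

theorem hasDerivAt_Phi (t : ℝ) :
    HasDerivAt Phi ((Real.sqrt (2 * Real.pi))⁻¹ * Real.exp (-(t ^ 2) / 2)) t := by
  have hcont : Continuous fun s : ℝ => Real.exp (-(s ^ 2) / 2) := by fun_prop
  have hsplit : Phi = fun x => (Real.sqrt (2 * Real.pi))⁻¹ *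
      ((∫ s in (0 : ℝ)..x, Real.exp (-(s ^ 2) / 2)) +
        ∫ s in Set.Iic (0 : ℝ), Real.exp (-(s ^ 2) / 2)) := by
    funext x
    rw [← intervalIntegral.integral_Iic_sub_Iic integrable_exp_neg_sq_div_two.integrableOn
      integrable_exp_neg_sq_div_two.integrableOn, sub_add_cancel, Phi]
  rw [hsplit]
  exact ((intervalIntegral.integral_hasDerivAt_right (hcont.intervalIntegrable _ _)
    (hcont.stronglyMeasurableAtFilter _ _) hcont.continuousAt).add_const _).const_mul _

theorem hasDerivAt_u (p η : ℝ) (n : ℕ) (w : ℝ) :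
    HasDerivAt (u p η n)
      ((Real.sqrt (2 * Real.pi))⁻¹ * (Real.sqrt n)⁻¹ *
        (p * Real.exp (-(((w + η * n) / Real.sqrt n) ^ 2) / 2) -
          (1 - p) * Real.exp (-(((-w + η * n) / Real.sqrt n) ^ 2) / 2))) w := by
  have h₁ : HasDerivAt (fun w : ℝ => (w + η * n) / Real.sqrt n) (1 / Real.sqrt n) w :=
    ((hasDerivAt_id w).add_const _).div_const _
  have h₂ : HasDerivAt (fun w : ℝ => (-w + η * n) / Real.sqrt n) (-1 / Real.sqrt n) w :=
    ((hasDerivAt_id w).neg.add_const _).div_const _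
  have h := (((hasDerivAt_Phi _).comp w h₁).const_mul p).add
    (((hasDerivAt_Phi _).comp w h₂).const_mul (1 - p))
  refine h.congr_deriv ?_
  ring

/-- The two Gaussian terms of `u'`, written as single exponentials, so that comparing them
amounts to comparing exponents: the first exponent exceeds the second by
`log p - log (1 - p) - 2ηw`. -/
theorem gaussian_terms_eq {p η : ℝ} {n : ℕ} (hp : 0 < p) (hp1 : p < 1) (hn : 0 < n) (w : ℝ) :
    ∃ a b : ℝ, p * Real.exp (-(((w + η * n) / Real.sqrt n) ^ 2) / 2) = Real.exp a ∧
      (1 - p) * Real.exp (-(((-w + η * n) / Real.sqrt n) ^ 2) / 2) = Real.exp b ∧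
      a - b = Real.log p - Real.log (1 - p) - 2 * η * w := by
  have hn' : (0 : ℝ) < n := by exact_mod_cast hn
  refine ⟨Real.log p + -(((w + η * n) / Real.sqrt n) ^ 2) / 2,
    Real.log (1 - p) + -(((-w + η * n) / Real.sqrt n) ^ 2) / 2, ?_, ?_, ?_⟩
  · rw [Real.exp_add, Real.exp_log hp]
  · rw [Real.exp_add, Real.exp_log (by linarith)]
  · rw [div_pow, div_pow, Real.sq_sqrt hn'.le]
    field_simp
    ring

/-- Theorem 4.1 (standard training): `u` attains a strict global maximum at the unique
point `w₁* = (ln p − ln(1−p))/(2η)`, and the robust feature weight `w₁*/n` equals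
`(ln p − ln(1−p))/(2nη)`. -/
theorem standard_training
    (p η : ℝ) (n : ℕ) (hp : 1 / 2 < p) (hp1 : p < 1) (hη : 0 < η) (hn : 0 < n) :
    (∀ w : ℝ, w ≠ (Real.log p - Real.log (1 - p)) / (2 * η) →
      u p η n w < u p η n ((Real.log p - Real.log (1 - p)) / (2 * η))) ∧
    ((Real.log p - Real.log (1 - p)) / (2 * η)) / n
      = (Real.log p - Real.log (1 - p)) / (2 * n * η) := by
  have hp0 : 0 < p := by linarith
  have hn' : (0 : ℝ) < n := by exact_mod_cast hn
  have hc : 0 < (Real.sqrt (2 * Real.pi))⁻¹ * (Real.sqrt n)⁻¹ := by positivity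
  have hcont : Continuous (u p η n) :=
    continuous_iff_continuousAt.2 fun w => (hasDerivAt_u p η n w).continuousAt
  refine ⟨fun w hw => ?_, by field_simp⟩
  set w₀ := (Real.log p - Real.log (1 - p)) / (2 * η) with hw₀
  have hL : Real.log p - Real.log (1 - p) = 2 * η * w₀ := by
    rw [hw₀]
    field_simp
  rcases lt_or_gt_of_ne hw with h | h
  · have hmono : StrictMonoOn (u p η n) (Set.Iic w₀) := by
      refine strictMonoOn_of_deriv_pos (convex_Iic _) hcont.continuousOn fun x hx => ?_
      rw [interior_Iic, Set.mem_Iio] at hx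
      obtain ⟨a, b, ha, hb, hab⟩ := gaussian_terms_eq (η := η) hp0 hp1 hn x
      rw [(hasDerivAt_u p η n x).deriv, ha, hb]
      refine mul_pos hc (sub_pos.2 (Real.exp_lt_exp.2 ?_))
      nlinarith
    exact hmono h.le Set.self_mem_Iic h
  · have hanti : StrictAntiOn (u p η n) (Set.Ici w₀) := by
      refine strictAntiOn_of_deriv_neg (convex_Ici _) hcont.continuousOn fun x hx => ?_
      rw [interior_Ici, Set.mem_Ioi] at hx
      obtain ⟨a, b, ha, hb, hab⟩ := gaussian_terms_eq (η := η) hp0 hp1 hn x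
      rw [(hasDerivAt_u p η n x).deriv, ha, hb]
      refine mul_neg_of_pos_of_neg hc (sub_neg.2 (Real.exp_lt_exp.2 ?_))
      nlinarith
    exact hanti Set.self_mem_Ici h.le h
end

section
/- Let ε > 0 and suppose w ∈ ℝ satisfies u(w − ε) = u(w + ε). Then w > w₁*, where w₁* = (ln p − ln(1 − p))/(2η). -/
/-- The derivative of `u`, factored around `W = w₁*`. The constant `K` collects the
normalizations, `√(p (1 - p))` and `exp (-η² n / 2)`. -/
theorem hasDerivAt_u_s14 (p η : ℝ) (n : ℕ) (hp : 0 < p) (hp1 : p < 1) (hn : 0 < n) (W : ℝ)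
    (hW : 2 * η * W = Real.log p - Real.log (1 - p)) :
    ∃ K : ℝ, 0 < K ∧ ∀ x, HasDerivAt (u p η n)
      (K * Real.exp (-x ^ 2 / (2 * n)) *
        (Real.exp (η * (W - x)) - Real.exp (-(η * (W - x))))) x := by
  have hn' : (0 : ℝ) < n := by exact_mod_cast hn
  have hs : 0 < Real.sqrt n := Real.sqrt_pos.2 hn'
  have hsq : Real.sqrt n ^ 2 = n := Real.sq_sqrt hn'.le
  refine ⟨(Real.sqrt (2 * Real.pi))⁻¹ * (1 / Real.sqrt n) *
    Real.exp ((Real.log p + Real.log (1 - p)) / 2 - η ^ 2 * n / 2), by positivity, fun x => ?_⟩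
  have h1 : HasDerivAt (fun x : ℝ => (x + η * n) / Real.sqrt n) (1 / Real.sqrt n) x :=
    ((hasDerivAt_id x).add_const _).div_const _
  have h2 : HasDerivAt (fun x : ℝ => (-x + η * n) / Real.sqrt n) (-1 / Real.sqrt n) x :=
    ((hasDerivAt_id x).neg.add_const _).div_const _
  have h := (((hasDerivAt_Phi _).comp x h1).const_mul p).add
    (((hasDerivAt_Phi _).comp x h2).const_mul (1 - p))
  have e1 : p * Real.exp (-(((x + η * n) / Real.sqrt n) ^ 2) / 2) =
      Real.exp ((Real.log p + Real.log (1 - p)) / 2 - η ^ 2 * n / 2) *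
        Real.exp (-x ^ 2 / (2 * n)) * Real.exp (η * (W - x)) := by
    nth_rewrite 1 [← Real.exp_log hp]
    rw [← Real.exp_add, ← Real.exp_add, ← Real.exp_add, div_pow, hsq]
    congr 1
    have : η * (W - x) = (Real.log p - Real.log (1 - p)) / 2 - η * x := by linarith
    rw [this]
    field_simp
    ring
  have e2 : (1 - p) * Real.exp (-(((-x + η * n) / Real.sqrt n) ^ 2) / 2) =
      Real.exp ((Real.log p + Real.log (1 - p)) / 2 - η ^ 2 * n / 2) *
        Real.exp (-x ^ 2 / (2 * n)) * Real.exp (-(η * (W - x))) := by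
    nth_rewrite 1 [← Real.exp_log (sub_pos.2 hp1)]
    rw [← Real.exp_add, ← Real.exp_add, ← Real.exp_add, div_pow, hsq]
    congr 1
    have : η * (W - x) = (Real.log p - Real.log (1 - p)) / 2 - η * x := by linarith
    rw [this]
    field_simp
    ring
  refine h.congr_deriv ?_
  linear_combination (Real.sqrt (2 * Real.pi))⁻¹ * (1 / Real.sqrt n) * e1 -
    (Real.sqrt (2 * Real.pi))⁻¹ * (1 / Real.sqrt n) * e2

/-- A function with the derivative of `hasDerivAt_u` is larger to the right of `W > 0` than at the
mirror point to the left. -/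
theorem u_reflect_lt {f : ℝ → ℝ} {K η W N : ℝ} (hK : 0 < K) (hη : 0 < η) (hW : 0 < W)
    (hN : 0 < N)
    (hf : ∀ x, HasDerivAt f (K * Real.exp (-x ^ 2 / (2 * N)) *
        (Real.exp (η * (W - x)) - Real.exp (-(η * (W - x))))) x)
    {ε : ℝ} (hε : 0 < ε) : f (W - ε) < f (W + ε) := by
  have hg : ∀ t, HasDerivAt (fun t => f (W + t) - f (W - t))
      (K * (Real.exp (η * t) - Real.exp (-(η * t))) *
        (Real.exp (-(W - t) ^ 2 / (2 * N)) - Real.exp (-(W + t) ^ 2 / (2 * N)))) t := by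
    intro t
    have h := ((hf (W + t)).comp_const_add W t).sub ((hf (W - t)).comp_const_sub W t)
    refine h.congr_deriv ?_
    have a1 : η * (W - (W + t)) = -(η * t) := by ring
    have a2 : η * (W - (W - t)) = η * t := by ring
    rw [a1, a2, neg_neg]
    ring
  have hmono : StrictMonoOn (fun t => f (W + t) - f (W - t)) (Set.Ici 0) := by
    refine strictMonoOn_of_deriv_pos (convex_Ici 0)
      (fun t _ => (hg t).continuousAt.continuousWithinAt) fun t ht => ?_
    rw [interior_Ici] at ht
    have ht : 0 < t := ht
    rw [(hg t).deriv]
    have b1 : Real.exp (-(η * t)) < Real.exp (η * t) := by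
      have := mul_pos hη ht
      exact Real.exp_lt_exp.2 (by linarith)
    have b2 : Real.exp (-(W + t) ^ 2 / (2 * N)) < Real.exp (-(W - t) ^ 2 / (2 * N)) := by
      refine Real.exp_lt_exp.2 (div_lt_div_of_pos_right ?_ (by positivity))
      nlinarith [mul_pos hW ht]
    exact mul_pos (mul_pos hK (sub_pos.2 b1)) (sub_pos.2 b2)
  have := hmono (Set.mem_Ici.2 le_rfl) (Set.mem_Ici.2 hε.le) hε
  simp only [add_zero, sub_zero, sub_self] at this
  linarith

/-- If `u(w−ε) = u(w+ε)` with `ε > 0`, then `w > w₁*`. -/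
theorem balance_exceeds_optimum
    (p η : ℝ) (n : ℕ) (hp : 1 / 2 < p) (hp1 : p < 1) (hη : 0 < η) (hn : 0 < n)
    (ε w : ℝ) (hε : 0 < ε) (hbal : u p η n (w - ε) = u p η n (w + ε)) :
    (Real.log p - Real.log (1 - p)) / (2 * η) < w := by
  by_contra! hle
  set W := (Real.log p - Real.log (1 - p)) / (2 * η) with hWdef
  have hW : 2 * η * W = Real.log p - Real.log (1 - p) := by
    rw [hWdef]
    field_simp
  have hW0 : 0 < W :=
    div_pos (sub_pos.2 (Real.log_lt_log (by linarith) (by linarith))) (by positivity)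
  have hn' : (0 : ℝ) < n := by exact_mod_cast hn
  obtain ⟨K, hK, hf⟩ := hasDerivAt_u_s14 p η n (by linarith) hp1 hn W hW
  have hinc : StrictMonoOn (u p η n) (Set.Iic W) := by
    refine strictMonoOn_of_deriv_pos (convex_Iic W)
      (fun t _ => (hf t).continuousAt.continuousWithinAt) fun t ht => ?_
    rw [interior_Iic] at ht
    rw [(hf t).deriv]
    have := mul_pos hη (sub_pos.2 (show t < W from ht))
    exact mul_pos (by positivity) (sub_pos.2 (Real.exp_lt_exp.2 (by linarith)))
  have hdec : StrictAntiOn (u p η n) (Set.Ici W) := by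
    refine strictAntiOn_of_deriv_neg (convex_Ici W)
      (fun t _ => (hf t).continuousAt.continuousWithinAt) fun t ht => ?_
    rw [interior_Ici] at ht
    rw [(hf t).deriv]
    have := mul_neg_of_pos_of_neg hη (sub_neg.2 (show W < t from ht))
    exact mul_neg_of_pos_of_neg (by positivity) (sub_neg.2 (Real.exp_lt_exp.2 (by linarith)))
  rcases le_total (w + ε) W with h | h
  · have := hinc (Set.mem_Iic.2 (by linarith)) (Set.mem_Iic.2 h)
      (show w - ε < w + ε by linarith)
    linarith
  · have h1 := hinc.monotoneOn (Set.mem_Iic.2 (by linarith)) (Set.mem_Iic.2 (by linarith))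
      (show w - ε ≤ W - ε by linarith)
    have h2 := hdec.antitoneOn (Set.mem_Ici.2 h) (Set.mem_Ici.2 (by linarith))
      (show w + ε ≤ W + ε by linarith)
    have h3 := u_reflect_lt hK hη hW0 hn' hf hε
    linarith
end

section
/- Let ũ: ℝ → ℝ be differentiable with ũ′(w) = e^{−w²}·(p·e^{−wη} − (1 − p)·e^{wη}) for all w. Then for every ε > 0 there exists w ∈ ℝ with ũ(w − ε) = ũ(w + ε). -/
/-!
The derivative of `ũ` is nonnegative to the left of `a = (ln p − ln(1−p))/(2η)` and nonpositive
to its right. Hence the continuous function `w ↦ ũ(w+ε) − ũ(w−ε)` is nonnegative at `a − ε`,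
where the window `[w−ε, w+ε]` ends at `a`, and nonpositive at `a + ε`, where it starts at `a`.
The intermediate value theorem gives a zero in between.
-/

/-- For a differentiable `ũ` with `ũ′(w) = e^{−w²}·(p·e^{−wη} − (1−p)·e^{wη})` and any
`ε > 0`, there exists `w` with `ũ(w−ε) = ũ(w+ε)`. -/
theorem exists_balanced_point
    (p η : ℝ) (hp : 1 / 2 < p) (hp1 : p < 1) (hη : 0 < η)
    (utld : ℝ → ℝ)
    (hderiv : ∀ x : ℝ, HasDerivAt utld
      (Real.exp (-x ^ 2) * (p * Real.exp (-x * η) - (1 - p) * Real.exp (x * η))) x)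
    (ε : ℝ) (hε : 0 < ε) :
    ∃ w : ℝ, utld (w - ε) = utld (w + ε) := by
  have hcont : Continuous utld :=
    continuous_iff_continuousAt.2 fun x => (hderiv x).continuousAt
  obtain ⟨a, ha⟩ : ∃ a : ℝ, a * η * 2 = Real.log p - Real.log (1 - p) :=
    ⟨(Real.log p - Real.log (1 - p)) / (2 * η), by field_simp⟩
  have hexp1 : ∀ x : ℝ, p * Real.exp (-x * η) = Real.exp (Real.log p + -x * η) := fun x => by
    rw [Real.exp_add, Real.exp_log (by linarith)]
  have hexp2 : ∀ x : ℝ, (1 - p) * Real.exp (x * η) = Real.exp (Real.log (1 - p) + x * η) :=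
    fun x => by rw [Real.exp_add, Real.exp_log (by linarith)]
  have hleft : utld (a - ε - ε) ≤ utld (a - ε + ε) := by
    obtain ⟨c, ⟨-, hc⟩, h⟩ := exists_hasDerivAt_eq_slope utld _
      (show a - ε - ε < a - ε + ε by linarith) hcont.continuousOn (fun x _ => hderiv x)
    rw [eq_div_iff (by linarith), hexp1, hexp2] at h
    have hca : c * η ≤ a * η := mul_le_mul_of_nonneg_right (by linarith) hη.le
    have hD : Real.exp (Real.log (1 - p) + c * η) ≤ Real.exp (Real.log p + -c * η) :=
      Real.exp_le_exp.2 (by linarith)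
    have := mul_nonneg (mul_nonneg (Real.exp_pos (-c ^ 2)).le (sub_nonneg.2 hD))
      (show 0 ≤ a - ε + ε - (a - ε - ε) by linarith)
    linarith
  have hright : utld (a + ε + ε) ≤ utld (a + ε - ε) := by
    obtain ⟨c, ⟨hc, -⟩, h⟩ := exists_hasDerivAt_eq_slope utld _
      (show a + ε - ε < a + ε + ε by linarith) hcont.continuousOn (fun x _ => hderiv x)
    rw [eq_div_iff (by linarith), hexp1, hexp2] at h
    have hca : a * η ≤ c * η := mul_le_mul_of_nonneg_right (by linarith) hη.le
    have hD : Real.exp (Real.log p + -c * η) ≤ Real.exp (Real.log (1 - p) + c * η) :=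
      Real.exp_le_exp.2 (by linarith)
    have := mul_nonpos_of_nonpos_of_nonneg
      (mul_nonpos_of_nonneg_of_nonpos (Real.exp_pos (-c ^ 2)).le (sub_nonpos.2 hD))
      (show 0 ≤ a + ε + ε - (a + ε - ε) by linarith)
    linarith
  exact intermediate_value_univ₂ (by fun_prop) (by fun_prop) hleft hright
end

section
/- Let ũ: ℝ → ℝ be differentiable with ũ′(w) = e^{−w²}·(p·e^{−wη} − (1 − p)·e^{wη}) for all w, and let w₁* = (ln p − ln(1 − p))/(2η). Suppose w: (0, ∞) → ℝ is any function such that for every ε > 0, ũ(w(ε) − ε) = ũ(w(ε) + ε). Then (w(ε) − w₁*)/ε² → (2/3)·w₁* as ε → 0⁺; i.e., the SAM optimum satisfies w^{SAM} = w₁* + (2/3)·w₁*·ε² + o(ε²), so the robust feature weight of SAM satisfies W_R^{SAM} ≈ W_R* + (2/3)·W_R*·ε². (Theorem 4.4.) -/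
/-!
Write `f` for the derivative of `ũ` and `a = w₁*`. The point `a` is the unique zero of `f`, and `f`
is positive to its left and negative to its right, so `ũ (w - ε) = ũ (w + ε)` forces `|w - a| < ε`
(`abs_sub_lt_of_balanced`). A third-order Taylor expansion of `ũ` at `a`
(`taylor_three_isLittleO`) turns the balance equation, with `d = w - a`, into
`2 A d ε + B (d² ε + ε³ / 3) = o(ε³)`, where `A = f'(a)` and `B = f''(a)`. Since `d → 0`, this gives
`d / ε² → -B / (6 A)` (`tendsto_of_balanced`). For the given `f` one finds `B = -4 a A`, so the limit
is `2 a / 3`.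
-/

open Filter Topology Asymptotics

/-- Peano form of the third-order Taylor formula at a critical point `a` of `F`: here `f₁ a`
and `B` are the second and third derivatives of `F` at `a`. Obtained by applying L'Hôpital's rule
twice. -/
theorem taylor_three_isLittleO {F f f₁ : ℝ → ℝ} {a B : ℝ}
    (hF : ∀ x, HasDerivAt F (f x) x) (hf : ∀ x, HasDerivAt f (f₁ x) x)
    (hf₁ : HasDerivAt f₁ B a) (h0 : f a = 0) :
    (fun s : ℝ => F (a + s) - F a - f₁ a * s ^ 2 / 2 - B * s ^ 3 / 6) =o[𝓝 0]
      fun s : ℝ => s ^ 3 := by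
  have hf₁' : Tendsto (fun s : ℝ => (f₁ (a + s) - f₁ a - B * s) / (6 * s)) (𝓝[≠] 0) (𝓝 0) := by
    have h := hasDerivAt_iff_tendsto_slope_zero.mp hf₁
    have h2 := (h.sub_const B).div_const 6
    simp only [sub_self, zero_div] at h2
    refine h2.congr' ?_
    filter_upwards [self_mem_nhdsWithin] with s hs
    have hs : s ≠ 0 := hs
    simp only [smul_eq_mul]
    field_simp
  have key : Tendsto (fun s : ℝ => (F (a + s) - F a - f₁ a * s ^ 2 / 2 - B * s ^ 3 / 6) / s ^ 3)
      (𝓝[≠] 0) (𝓝 0) := by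
    have dF : ∀ s, HasDerivAt (fun s : ℝ => F (a + s)) (f (a + s)) s := fun s =>
      (hF (a + s)).comp_const_add a s
    have df : ∀ s, HasDerivAt (fun s : ℝ => f (a + s)) (f₁ (a + s)) s := fun s =>
      (hf (a + s)).comp_const_add a s
    have d1 : ∀ s, HasDerivAt (fun s : ℝ => F (a + s) - F a - f₁ a * s ^ 2 / 2 - B * s ^ 3 / 6)
        (f (a + s) - f₁ a * s - B * s ^ 2 / 2) s := fun s => by
      refine HasDerivAt.congr_deriv ((((dF s).sub_const (F a)).sub (((hasDerivAt_pow 2 s).const_mul (f₁ a)).div_const 2)).sub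
        (((hasDerivAt_pow 3 s).const_mul B).div_const 6)) ?_
      push_cast; ring
    have d2 : ∀ s, HasDerivAt (fun s : ℝ => f (a + s) - f₁ a * s - B * s ^ 2 / 2)
        (f₁ (a + s) - f₁ a - B * s) s := fun s => by
      refine HasDerivAt.congr_deriv (((df s).sub ((hasDerivAt_id s).const_mul (f₁ a))).sub
        (((hasDerivAt_pow 2 s).const_mul B).div_const 2)) ?_
      push_cast; ring
    have e1 : ∀ s : ℝ, HasDerivAt (fun s : ℝ => s ^ 3) (3 * s ^ 2) s := fun s => by
      simpa using hasDerivAt_pow 3 s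
    have e2 : ∀ s : ℝ, HasDerivAt (fun s : ℝ => 3 * s ^ 2) (6 * s) s := fun s => by
      refine HasDerivAt.congr_deriv ((hasDerivAt_pow 2 s).const_mul 3) ?_
      push_cast; ring
    have t1 := (d1 0).continuousAt.tendsto.mono_left (nhdsWithin_le_nhds (s := {0}ᶜ))
    have t2 := (d2 0).continuousAt.tendsto.mono_left (nhdsWithin_le_nhds (s := {0}ᶜ))
    have t3 := (e1 0).continuousAt.tendsto.mono_left (nhdsWithin_le_nhds (s := {0}ᶜ))
    have t4 := (e2 0).continuousAt.tendsto.mono_left (nhdsWithin_le_nhds (s := {0}ᶜ))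
    have ne : ∀ᶠ s : ℝ in 𝓝[≠] 0, s ≠ 0 := self_mem_nhdsWithin
    refine HasDerivAt.lhopital_zero_nhdsNE (.of_forall d1) (.of_forall e1)
      (ne.mono fun s hs => by positivity) (by simpa using t1) (by simpa using t3) ?_
    exact HasDerivAt.lhopital_zero_nhdsNE (.of_forall d2) (.of_forall e2)
      (ne.mono fun s hs => by positivity) (by simpa [h0] using t2) (by simpa using t4) hf₁'
  have h := (isLittleO_iff_tendsto' (l := 𝓝[≠] (0 : ℝ)) (by
    filter_upwards [self_mem_nhdsWithin] with s hs h
    exact absurd (pow_eq_zero_iff (by norm_num) |>.mp h) hs)).mpr key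
  rw [← nhdsNE_sup_pure, isLittleO_sup]
  refine ⟨h, ?_⟩
  rw [isLittleO_pure]
  simp

/-- The balance equation for a function with a single strict peak at `a` localizes `w` near `a`. -/
theorem abs_sub_lt_of_balanced {F f : ℝ → ℝ} {a w ε : ℝ} (hF : ∀ x, HasDerivAt F (f x) x)
    (hpos : ∀ x < a, 0 < f x) (hneg : ∀ x, a < x → f x < 0) (hε : 0 < ε)
    (hw : F (w - ε) = F (w + ε)) : |w - a| < ε := by
  have hc : Continuous F := continuous_iff_continuousAt.mpr fun x => (hF x).continuousAt
  have hmono : StrictMonoOn F (Set.Iic a) := strictMonoOn_of_deriv_pos (convex_Iic a)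
    hc.continuousOn fun x hx => by
      rw [interior_Iic] at hx; rw [(hF x).deriv]; exact hpos x hx
  have hanti : StrictAntiOn F (Set.Ici a) := strictAntiOn_of_deriv_neg (convex_Ici a)
    hc.continuousOn fun x hx => by
      rw [interior_Ici] at hx; rw [(hF x).deriv]; exact hneg x hx
  rw [abs_lt]
  constructor
  · by_contra! h
    have := hmono (a := w - ε) (b := w + ε) (by simp; linarith) (by simp; linarith) (by linarith)
    linarith
  · by_contra! h
    have := hanti (a := w - ε) (b := w + ε) (by simp; linarith) (by simp; linarith) (by linarith)
    linarith

/-- At a nondegenerate critical point `a` of `F`, a balanced point within `ε` of `a` has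
displacement `-B / (6 A) · ε² + o(ε²)`, where `A` and `B` are the second and third derivatives of
`F` at `a`. -/
theorem tendsto_of_balanced {F f f₁ w : ℝ → ℝ} {a A B : ℝ}
    (hF : ∀ x, HasDerivAt F (f x) x) (hf : ∀ x, HasDerivAt f (f₁ x) x)
    (hf₁ : HasDerivAt f₁ B a) (h0 : f a = 0) (hA : f₁ a = A) (hA0 : A ≠ 0)
    (hw : ∀ ε : ℝ, 0 < ε → F (w ε - ε) = F (w ε + ε))
    (hd : ∀ ε : ℝ, 0 < ε → |w ε - a| < ε) :
    Tendsto (fun ε => (w ε - a) / ε ^ 2) (𝓝[>] 0) (𝓝 (-B / (6 * A))) := by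
  have hT := taylor_three_isLittleO hF hf hf₁ h0
  rw [hA] at hT
  set R : ℝ → ℝ := fun s => F (a + s) - F a - A * s ^ 2 / 2 - B * s ^ 3 / 6 with hR
  have hpos : ∀ᶠ ε : ℝ in 𝓝[>] 0, 0 < ε := self_mem_nhdsWithin
  have hid : Tendsto (fun ε : ℝ => ε) (𝓝[>] 0) (𝓝 0) := nhdsWithin_le_nhds
  have hd0 : Tendsto (fun ε => w ε - a) (𝓝[>] 0) (𝓝 0) :=
    squeeze_zero_norm' (hpos.mono fun ε h => (hd ε h).le) hid
  -- Both `d + ε` and `d - ε` are of size at most `2 ε`, so their remainders are `o(ε³)`.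
  have hrem : ∀ σ : ℝ, |σ| = 1 →
      Tendsto (fun ε => R (w ε - a + σ * ε) / ε ^ 3) (𝓝[>] 0) (𝓝 0) := by
    intro σ hσ
    have ht : Tendsto (fun ε => w ε - a + σ * ε) (𝓝[>] 0) (𝓝 0) := by
      simpa using hd0.add (hid.const_mul σ)
    have hO : (fun ε => w ε - a + σ * ε) =O[𝓝[>] 0] fun ε : ℝ => ε := by
      refine IsBigO.of_bound 2 (hpos.mono fun ε h => ?_)
      rw [Real.norm_eq_abs, Real.norm_eq_abs, abs_of_pos h]
      have h1 := abs_add_le (w ε - a) (σ * ε)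
      rw [abs_mul, hσ, abs_of_pos h] at h1
      linarith [hd ε h]
    exact ((hT.comp_tendsto ht).trans_isBigO (hO.pow 3)).tendsto_div_nhds_zero
  have hp := hrem 1 (by simp)
  have hm := hrem (-1) (by simp)
  have hnum : Tendsto (fun ε => -B / (6 * A) -
      (R (w ε - a + 1 * ε) / ε ^ 3 - R (w ε - a + (-1) * ε) / ε ^ 3) / (2 * A))
      (𝓝[>] 0) (𝓝 (-B / (6 * A))) := by
    simpa using ((hp.sub hm).div_const (2 * A)).const_sub (-B / (6 * A))
  have hden : Tendsto (fun ε => 1 + B / (2 * A) * (w ε - a)) (𝓝[>] 0) (𝓝 1) := by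
    simpa using (hd0.const_mul (B / (2 * A))).const_add 1
  have hq := hnum.div hden one_ne_zero
  rw [div_one] at hq
  refine hq.congr' ?_
  filter_upwards [hpos, hden.eventually_ne one_ne_zero] with ε hε hne
  simp only [Pi.div_apply]
  rw [div_eq_iff hne]
  have e1 : R (w ε - a + 1 * ε) - R (w ε - a + (-1) * ε) =
      -(2 * A * (w ε - a) * ε + B * ((w ε - a) ^ 2 * ε + ε ^ 3 / 3)) := by
    simp only [hR]
    rw [show a + (w ε - a + 1 * ε) = w ε + ε by ring,
      show a + (w ε - a + (-1) * ε) = w ε - ε by ring, hw ε hε]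
    ring
  rw [← sub_div, e1]
  field_simp
  ring

/-- Theorem 4.4: if `w(ε)` balances the endpoint values of `ũ` for every radius `ε > 0`,
then `(w(ε) − w₁*)/ε² → (2/3)·w₁*` as `ε → 0⁺`; i.e.
`w^{SAM} = w₁* + (2/3)·w₁*·ε² + o(ε²)`. -/
theorem sam_second_order_expansion
    (p η : ℝ) (hp : 1 / 2 < p) (hp1 : p < 1) (hη : 0 < η)
    (utld : ℝ → ℝ)
    (hderiv : ∀ x : ℝ, HasDerivAt utld
      (Real.exp (-x ^ 2) * (p * Real.exp (-x * η) - (1 - p) * Real.exp (x * η))) x)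
    (w : ℝ → ℝ)
    (hw : ∀ ε : ℝ, 0 < ε → utld (w ε - ε) = utld (w ε + ε)) :
    Filter.Tendsto
      (fun ε : ℝ => (w ε - (Real.log p - Real.log (1 - p)) / (2 * η)) / ε ^ 2)
      (nhdsWithin 0 (Set.Ioi 0))
      (nhds (2 / 3 * ((Real.log p - Real.log (1 - p)) / (2 * η)))) := by
  set a := (Real.log p - Real.log (1 - p)) / (2 * η) with ha
  have hp0 : 0 < p := by linarith
  have hq0 : 0 < 1 - p := by linarith
  have hlog : Real.log p - a * η = Real.log (1 - p) + a * η := by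
    rw [ha]; field_simp; ring
  have hpx : ∀ x, p * Real.exp (-x * η) = Real.exp (Real.log p - x * η) := fun x => by
    rw [sub_eq_add_neg, Real.exp_add, Real.exp_log hp0, neg_mul]
  have hqx : ∀ x, (1 - p) * Real.exp (x * η) = Real.exp (Real.log (1 - p) + x * η) := fun x => by
    rw [Real.exp_add, Real.exp_log hq0]
  have hbal : p * Real.exp (-a * η) = (1 - p) * Real.exp (a * η) := by
    rw [hpx, hqx, hlog]
  have hE : ∀ x : ℝ, HasDerivAt (fun x : ℝ => Real.exp (-x ^ 2)) (Real.exp (-x ^ 2) * (-2 * x)) x :=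
    fun x => by
      refine HasDerivAt.congr_deriv ((hasDerivAt_pow 2 x).neg.exp) ?_
      simp [mul_comm]
  have hP : ∀ x : ℝ, HasDerivAt (fun x : ℝ => p * Real.exp (-x * η))
      (-η * (p * Real.exp (-x * η))) x := fun x => by
    refine HasDerivAt.congr_deriv ((((hasDerivAt_id x).neg.mul_const η).exp).const_mul p) ?_
    simp; ring
  have hQ : ∀ x : ℝ, HasDerivAt (fun x : ℝ => (1 - p) * Real.exp (x * η))
      (η * ((1 - p) * Real.exp (x * η))) x := fun x => by
    refine HasDerivAt.congr_deriv ((((hasDerivAt_id x).mul_const η).exp).const_mul (1 - p)) ?_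
    simp; ring
  have hf := fun x => (hE x).mul ((hP x).sub (hQ x))
  -- The product rule gives the second derivative of the loss derivative.
  have hf₁ := ((hE a).mul ((hasDerivAt_id a).const_mul (-2))).mul ((hP a).sub (hQ a)) |>.add
    ((hE a).mul (((hP a).const_mul (-η)).sub ((hQ a).const_mul η)))
  have hd : ∀ ε : ℝ, 0 < ε → |w ε - a| < ε := fun ε hε => by
    refine abs_sub_lt_of_balanced hderiv (fun x hx => ?_) (fun x hx => ?_) hε (hw ε hε)
    · refine mul_pos (Real.exp_pos _) ?_
      rw [hpx, hqx, sub_pos, Real.exp_lt_exp]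
      nlinarith
    · refine mul_neg_of_pos_of_neg (Real.exp_pos _) ?_
      rw [hpx, hqx, sub_neg, Real.exp_lt_exp]
      nlinarith
  have hpa : 0 < (1 - p) * Real.exp (a * η) := by positivity
  have hEa := Real.exp_pos (-a ^ 2)
  have h := tendsto_of_balanced (A := -2 * η * Real.exp (-a ^ 2) * ((1 - p) * Real.exp (a * η)))
    hderiv hf hf₁ (by rw [hbal]; ring) (by simp only [Pi.sub_apply, hbal]; ring)
    (by simp only [neg_mul]; exact neg_ne_zero.mpr (by positivity)) hw hd
  convert h using 2
  simp only [Pi.sub_apply, Pi.mul_apply, id, hbal]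
  field_simp
  ring
end
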